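/- arXiv:2406.00433 — 7 statements merged into one kernel-verified Lean document; each statement's English description precedes it below -/
import Mathlib

section
/- Let ω ≥ 0 and let u : ℝ × ℝ → ℝ be a smooth solution of the regularized Camassa–Holm equation that is 2π-periodic in its spatial variable x. Then the energy E(t) = (1/2) ∫₀^{2π} (u(x,t)² + u_x(x,t)²) dx is conserved: the function t ↦ E(t) has derivative zero at every t ∈ ℝ. -/
/-!
Differentiating under the integral sign gives `E'(t) = ∫₀^{2π} (u u_t + u_x u_{xt}) dx`.
By the equation and the symmetry `u_{xxt} = u_{xtx}`, the integrand is the `x`-derivative of the flux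
`F = u u_{xt} - (ω / 2) u² - u³ + u² u_{xx}`:
indeed `u u_t + u_x u_{xt} = (u u_{xt})_x + u (u_t - u_{xxt})`, and
`u (u_t - u_{xxt}) = (-(ω / 2) u² - u³ + u² u_{xx})_x` by the equation.
Since `F` is `2π`-periodic in `x`, the integral over a period vanishes.
-/

open Real

/-- Partial derivative with respect to the first (spatial) variable. -/
noncomputable def pdx (u : ℝ → ℝ → ℝ) : ℝ → ℝ → ℝ := fun x t => deriv (fun y => u y t) x

/-- Partial derivative with respect to the second (time) variable. -/
noncomputable def pdt (u : ℝ → ℝ → ℝ) : ℝ → ℝ → ℝ := fun x t => deriv (fun s => u x s) t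

/-- Joint smoothness of a function of `(x, t)`. -/
def JointSmooth (v : ℝ → ℝ → ℝ) : Prop :=
  ContDiff ℝ (⊤ : ℕ∞) (fun p : ℝ × ℝ => v p.1 p.2)

namespace JointSmooth

variable {v : ℝ → ℝ → ℝ}

lemma differentiable (hv : JointSmooth v) :
    Differentiable ℝ (fun p : ℝ × ℝ => v p.1 p.2) :=
  ContDiff.differentiable hv (by simp)

lemma hasDerivAt_fst (hv : JointSmooth v) (x t : ℝ) :
    HasDerivAt (fun y => v y t) (fderiv ℝ (fun p : ℝ × ℝ => v p.1 p.2) (x, t) (1, 0)) x :=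
  (hv.differentiable (x, t)).hasFDerivAt.comp_hasDerivAt (f := fun y => (y, t)) x
    ((hasDerivAt_id x).prodMk (hasDerivAt_const x t))

lemma hasDerivAt_snd (hv : JointSmooth v) (x t : ℝ) :
    HasDerivAt (fun s => v x s) (fderiv ℝ (fun p : ℝ × ℝ => v p.1 p.2) (x, t) (0, 1)) t :=
  (hv.differentiable (x, t)).hasFDerivAt.comp_hasDerivAt (f := fun s => (x, s)) t
    ((hasDerivAt_const t x).prodMk (hasDerivAt_id t))

lemma pdx_eq (hv : JointSmooth v) (x t : ℝ) :
    pdx v x t = fderiv ℝ (fun p : ℝ × ℝ => v p.1 p.2) (x, t) (1, 0) :=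
  (hv.hasDerivAt_fst x t).deriv

lemma pdt_eq (hv : JointSmooth v) (x t : ℝ) :
    pdt v x t = fderiv ℝ (fun p : ℝ × ℝ => v p.1 p.2) (x, t) (0, 1) :=
  (hv.hasDerivAt_snd x t).deriv

lemma hasDerivAt_pdx (hv : JointSmooth v) (x t : ℝ) :
    HasDerivAt (fun y => v y t) (pdx v x t) x :=
  hv.pdx_eq x t ▸ hv.hasDerivAt_fst x t

lemma hasDerivAt_pdt (hv : JointSmooth v) (x t : ℝ) :
    HasDerivAt (fun s => v x s) (pdt v x t) t :=
  hv.pdt_eq x t ▸ hv.hasDerivAt_snd x t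

lemma contDiff_fderiv (hv : JointSmooth v) :
    ContDiff ℝ (⊤ : ℕ∞) (fderiv ℝ (fun p : ℝ × ℝ => v p.1 p.2)) :=
  ContDiff.fderiv_right hv (by simp)

lemma smooth_pdx (hv : JointSmooth v) : JointSmooth (pdx v) := by
  unfold JointSmooth
  simp_rw [hv.pdx_eq]
  exact hv.contDiff_fderiv.clm_apply contDiff_const

lemma smooth_pdt (hv : JointSmooth v) : JointSmooth (pdt v) := by
  unfold JointSmooth
  simp_rw [hv.pdt_eq]
  exact hv.contDiff_fderiv.clm_apply contDiff_const

lemma pdx_pdt_comm (hv : JointSmooth v) (x t : ℝ) :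
    pdx (pdt v) x t = pdt (pdx v) x t := by
  have hd := (hv.contDiff_fderiv.differentiable (by simp) (x, t)).hasFDerivAt
  have hsymm : IsSymmSndFDerivAt ℝ (fun p : ℝ × ℝ => v p.1 p.2) (x, t) :=
    (ContDiff.contDiffAt hv).isSymmSndFDerivAt (by
      simpa using WithTop.coe_le_coe.2 (le_top : (2 : ℕ∞) ≤ ⊤))
  rw [hv.smooth_pdt.pdx_eq, hv.smooth_pdx.pdt_eq]
  simp_rw [hv.pdx_eq, hv.pdt_eq]
  rw [(hd.clm_apply (hasFDerivAt_const ((0, 1) : ℝ × ℝ) (x, t))).fderiv,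
    (hd.clm_apply (hasFDerivAt_const ((1, 0) : ℝ × ℝ) (x, t))).fderiv]
  simpa using hsymm.eq (1, 0) (0, 1)

lemma continuous (hv : JointSmooth v) : Continuous (fun p : ℝ × ℝ => v p.1 p.2) :=
  ContDiff.continuous hv

end JointSmooth

lemma pdx_periodic {v : ℝ → ℝ → ℝ} {c : ℝ} (h : ∀ x t, v (x + c) t = v x t) (x t : ℝ) :
    pdx v (x + c) t = pdx v x t := by
  unfold pdx
  rw [← deriv_comp_add_const]
  simp_rw [h]

lemma pdt_periodic {v : ℝ → ℝ → ℝ} {c : ℝ} (h : ∀ x t, v (x + c) t = v x t) (x t : ℝ) :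
    pdt v (x + c) t = pdt v x t := by
  unfold pdt
  simp_rw [h]

/-- Differentiation under the integral sign; the dominating constant is a bound for `f'` on the
compact set `[[a, b]] × [t - 1, t + 1]`. -/
lemma hasDerivAt_integral_of_jointly_continuous {f f' : ℝ → ℝ → ℝ} (a b t : ℝ)
    (hf : Continuous (fun p : ℝ × ℝ => f p.1 p.2))
    (hf' : Continuous (fun p : ℝ × ℝ => f' p.1 p.2))
    (hd : ∀ x s, HasDerivAt (fun s => f x s) (f' x s) s) :
    HasDerivAt (fun s => ∫ x in a..b, f x s) (∫ x in a..b, f' x t) t := by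
  obtain ⟨C, hC⟩ := ((isCompact_uIcc (a := a) (b := b)).prod
    (isCompact_closedBall t 1)).exists_bound_of_continuousOn hf'.continuousOn
  have hc : ∀ s, Continuous (fun x => f x s) := fun s =>
    hf.comp (continuous_id.prodMk continuous_const)
  have hc' : Continuous (fun x => f' x t) := hf'.comp (continuous_id.prodMk continuous_const)
  refine (intervalIntegral.hasDerivAt_integral_of_dominated_loc_of_deriv_le
    (F := fun s x => f x s) (F' := fun s x => f' x s) (bound := fun _ => C)
    (Metric.closedBall_mem_nhds t one_pos)
    (Filter.Eventually.of_forall fun s => (hc s).aestronglyMeasurable)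
    ((hc t).intervalIntegrable a b) hc'.aestronglyMeasurable
    (Filter.Eventually.of_forall fun x hx s hs => hC (x, s) ⟨Set.uIoc_subset_uIcc hx, hs⟩)
    intervalIntegrable_const
    (Filter.Eventually.of_forall fun x _ s _ => hd x s)).2

/-- For `ω ≥ 0` and a smooth, `2π`-spatially-periodic solution `u` of the
regularized Camassa–Holm equation, the energy
`E(t) = (1/2) ∫₀^{2π} (u² + u_x²) dx` is conserved: `t ↦ E(t)` has zero derivative. -/
theorem energy_conserved_rCH (ω : ℝ) (hω : 0 ≤ ω) (u : ℝ → ℝ → ℝ)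
    (hsmooth : ContDiff ℝ (⊤ : ℕ∞) (fun p : ℝ × ℝ => u p.1 p.2))
    (hper : ∀ x t, u (x + 2 * π) t = u x t)
    (hPDE : ∀ x t,
      pdt u x t + ω * pdx u x t - pdt (pdx (pdx u)) x t + 3 * u x t * pdx u x t
        = 2 * pdx u x t * pdx (pdx u) x t + u x t * pdx (pdx (pdx u)) x t) :
    ∀ t : ℝ,
      deriv (fun s => (1/2) * ∫ x in (0:ℝ)..(2 * π), ((u x s) ^ 2 + (pdx u x s) ^ 2)) t
        = 0 := by
  intro t
  have hu : JointSmooth u := hsmooth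
  have hux := hu.smooth_pdx
  have hut := hu.smooth_pdt
  have huxx := hux.smooth_pdx
  have huxt := hux.smooth_pdt
  have cu := hu.continuous
  have cux := hux.continuous
  have cut := hut.continuous
  have cuxt := huxt.continuous
  have hcont : Continuous (fun p : ℝ × ℝ =>
      2 * (u p.1 p.2 * pdt u p.1 p.2 + pdx u p.1 p.2 * pdt (pdx u) p.1 p.2)) := by
    fun_prop
  have hE := hasDerivAt_integral_of_jointly_continuous
    (f := fun x s => (u x s) ^ 2 + (pdx u x s) ^ 2)
    (f' := fun x s => 2 * (u x s * pdt u x s + pdx u x s * pdt (pdx u) x s))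
    0 (2 * π) t (by fun_prop) hcont
    (fun x s => (((hu.hasDerivAt_pdt x s).pow 2).add ((hux.hasDerivAt_pdt x s).pow 2)).congr_deriv
      (by push_cast; ring))
  rw [(hE.const_mul (1/2)).deriv]
  -- The integrand is twice the `x`-derivative of the flux.
  have hflux : ∀ x, HasDerivAt (fun y => 2 * (u y t * pdt (pdx u) y t - ω / 2 * u y t ^ 2
      - u y t ^ 3 + u y t ^ 2 * pdx (pdx u) y t))
      (2 * (u x t * pdt u x t + pdx u x t * pdt (pdx u) x t)) x := by
    intro x
    have h1 := hu.hasDerivAt_pdx x t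
    have h2 := huxt.hasDerivAt_pdx x t
    have h3 := huxx.hasDerivAt_pdx x t
    rw [hux.pdx_pdt_comm] at h2
    refine (((((h1.mul h2).sub ((h1.pow 2).const_mul (ω / 2))).sub (h1.pow 3)).add
      ((h1.pow 2).mul h3)).const_mul 2).congr_deriv ?_
    push_cast
    simp only [Pi.pow_apply]
    linear_combination (-2 * u x t) * hPDE x t
  rw [intervalIntegral.integral_eq_sub_of_hasDerivAt (fun x _ => hflux x)
    ((hcont.comp (continuous_id.prodMk continuous_const)).intervalIntegrable _ _)]
  have e1 := hper 0 t
  have e2 := pdx_periodic (pdx_periodic hper) 0 t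
  have e3 := pdt_periodic (pdx_periodic hper) 0 t
  rw [zero_add] at e1 e2 e3
  rw [e1, e2, e3]
  ring
end

section
/- Let c, ω ∈ ℝ, A ∈ ℝ, and let φ : ℝ → ℝ be three times continuously differentiable with φ(x) < c for all x, satisfying the traveling-wave equation with speed c and integration constant A. Let y₁ : ℝ → ℝ be a twice continuously differentiable solution of (L y₁)(x) = 0 whose Wronskian with φ' is normalized so that y₁(x) φ''(x) - y₁'(x) φ'(x) = (c - φ(0))/(c - φ(x)) for all x ∈ ℝ. Then the function h(x) := (1/(c - φ(0))) [ (φ(x) - φ(0)) y₁(x) - φ'(x) ∫₀ˣ y₁(s) ds ] is twice continuously differentiable and satisfies (L h)(x) = 1 for all x ∈ ℝ. -/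
/-!
Write `p = c - φ` and `I(x) = ∫₀ˣ y₁`. Differentiating the traveling-wave equation gives `L φ' = 0`.
In the derivative of `(φ - φ(0)) y₁ - φ' I` the two terms `φ' y₁` cancel, leaving
`(φ - φ(0)) y₁' - φ'' I`. Multiplying by `p` and differentiating once more,
`(c - φ(0)) L h = (φ - φ(0)) L y₁ - I L φ' + p (y₁ φ'' - y₁' φ')`,
whose first two terms vanish and whose last term is `c - φ(0)` by the Wronskian normalization.
-/

open Real

/-- The linearized operator `L` around a traveling wave `φ`:
`(L f)(x) = -((c - φ) f')'(x) + (c - ω - 3 φ(x) + φ''(x)) f(x)`. -/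
noncomputable def Lop (c ω : ℝ) (φ f : ℝ → ℝ) : ℝ → ℝ := fun x =>
  -deriv (fun y => (c - φ y) * deriv f y) x + (c - ω - 3 * φ x + deriv (deriv φ) x) * f x

/-- The derivative of the traveling wave lies in the kernel of `L`: this is the `x`-derivative of the
traveling-wave equation. -/
lemma Lop_deriv_eq_zero (c ω A : ℝ) (φ : ℝ → ℝ) (hφ : ContDiff ℝ 3 φ)
    (hTW : ∀ x : ℝ,
      -(c - φ x) * deriv (deriv φ) x + (c - ω) * φ x
        - (3/2) * φ x ^ 2 + (1/2) * (deriv φ x) ^ 2 + A = 0) (x : ℝ) :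
    Lop c ω φ (deriv φ) x = 0 := by
  have hφ1 : ContDiff ℝ 2 (deriv φ) := hφ.deriv'
  have hφ2 : ContDiff ℝ 1 (deriv (deriv φ)) := hφ1.deriv'
  have d0 : HasDerivAt φ (deriv φ x) x := (hφ.differentiable (by norm_num) x).hasDerivAt
  have d1 : HasDerivAt (deriv φ) (deriv (deriv φ) x) x :=
    (hφ1.differentiable (by norm_num) x).hasDerivAt
  have d2 : HasDerivAt (fun y => (c - φ y) * deriv (deriv φ) y)
      (deriv (fun y => (c - φ y) * deriv (deriv φ) y) x) x :=
    ((d0.differentiableAt.const_sub c).mul (hφ2.differentiable (by norm_num) x)).hasDerivAt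
  have h1 := ((((d2.neg.add (d0.const_mul (c - ω))).sub ((d0.pow 2).const_mul (3/2))).add
    ((d1.pow 2).const_mul (1/2))).add_const A)
  have h2 := h1.unique ((hasDerivAt_const x (0 : ℝ)).congr_of_eventuallyEq
    (Filter.Eventually.of_forall fun y => by
      have := hTW y
      simp only [Pi.add_apply, Pi.sub_apply, Pi.neg_apply, Pi.pow_apply]
      linarith))
  unfold Lop
  norm_num at h2
  linarith

/-- Variation of parameters: if `φ` is a `C³` traveling wave with
`φ < c`, and `y₁` solves `L y₁ = 0` with Wronskian against `φ'` normalized by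
`y₁ φ'' - y₁' φ' = (c - φ(0))/(c - φ(x))`, then
`h(x) = (1/(c - φ(0)))[(φ(x) - φ(0)) y₁(x) - φ'(x) ∫₀ˣ y₁]` is `C²` and `L h = 1`. -/
theorem variation_of_parameters_Lh_eq_one (c ω A : ℝ) (φ y₁ : ℝ → ℝ)
    (hφ : ContDiff ℝ 3 φ) (hφc : ∀ x, φ x < c)
    (hTW : ∀ x : ℝ,
      -(c - φ x) * deriv (deriv φ) x + (c - ω) * φ x
        - (3/2) * φ x ^ 2 + (1/2) * (deriv φ x) ^ 2 + A = 0)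
    (hy : ContDiff ℝ 2 y₁) (hLy : ∀ x : ℝ, Lop c ω φ y₁ x = 0)
    (hW : ∀ x : ℝ,
      y₁ x * deriv (deriv φ) x - deriv y₁ x * deriv φ x = (c - φ 0) / (c - φ x)) :
    ContDiff ℝ 2 (fun x =>
      (1 / (c - φ 0)) * ((φ x - φ 0) * y₁ x - deriv φ x * ∫ s in (0:ℝ)..x, y₁ s)) ∧
    ∀ x : ℝ,
      Lop c ω φ (fun y =>
        (1 / (c - φ 0)) * ((φ y - φ 0) * y₁ y - deriv φ y * ∫ s in (0:ℝ)..y, y₁ s)) x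
      = 1 := by
  have hk : c - φ 0 ≠ 0 := (sub_pos.2 (hφc 0)).ne'
  have hφ1 : ContDiff ℝ 2 (deriv φ) := hφ.deriv'
  have hφ2 : ContDiff ℝ 1 (deriv (deriv φ)) := hφ1.deriv'
  have hy1 : ContDiff ℝ 1 (deriv y₁) := hy.deriv'
  have hI : ∀ x, HasDerivAt (fun x => ∫ s in (0:ℝ)..x, y₁ s) (y₁ x) x := fun x =>
    (hy.continuous.integral_hasStrictDerivAt 0 x).hasDerivAt
  have hIC : ContDiff ℝ 2 (fun x => ∫ s in (0:ℝ)..x, y₁ s) := by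
    rw [show (2 : WithTop ℕ∞) = 1 + 1 by norm_num, contDiff_succ_iff_deriv]
    refine ⟨fun x => (hI x).differentiableAt, by simp, ?_⟩
    rw [funext fun x => (hI x).deriv]
    exact hy.of_le (by norm_num)
  have d0 : ∀ x, HasDerivAt φ (deriv φ x) x := fun x =>
    (hφ.differentiable (by norm_num) x).hasDerivAt
  have d1 : ∀ x, HasDerivAt (deriv φ) (deriv (deriv φ) x) x := fun x =>
    (hφ1.differentiable (by norm_num) x).hasDerivAt
  have e0 : ∀ x, HasDerivAt y₁ (deriv y₁ x) x := fun x =>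
    (hy.differentiable (by norm_num) x).hasDerivAt
  refine ⟨contDiff_const.mul ((((hφ.of_le (by norm_num)).sub contDiff_const).mul hy).sub
    (hφ1.mul hIC)), fun x => ?_⟩
  have hh : ∀ x, deriv (fun y =>
      (1 / (c - φ 0)) * ((φ y - φ 0) * y₁ y - deriv φ y * ∫ s in (0:ℝ)..y, y₁ s)) x =
      (1 / (c - φ 0)) * ((φ x - φ 0) * deriv y₁ x
        - deriv (deriv φ) x * ∫ s in (0:ℝ)..x, y₁ s) := by
    intro x
    refine HasDerivAt.deriv (HasDerivAt.congr_deriv (((((d0 x).sub_const (φ 0)).mul (e0 x)).sub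
      ((d1 x).mul (hI x))).const_mul (1 / (c - φ 0))) ?_)
    ring
  -- `p y₁'` and `p φ''` are kept as single functions, matching the shape of `L y₁` and `L φ'`.
  have e1 : HasDerivAt (fun y => (c - φ y) * deriv y₁ y)
      (deriv (fun y => (c - φ y) * deriv y₁ y) x) x :=
    (((d0 x).differentiableAt.const_sub c).mul (hy1.differentiable (by norm_num) x)).hasDerivAt
  have d2 : HasDerivAt (fun y => (c - φ y) * deriv (deriv φ) y)
      (deriv (fun y => (c - φ y) * deriv (deriv φ) y) x) x :=
    (((d0 x).differentiableAt.const_sub c).mul (hφ2.differentiable (by norm_num) x)).hasDerivAt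
  have hph := ((((d0 x).sub_const (φ 0)).mul e1).sub (d2.mul (hI x))).const_mul (1 / (c - φ 0))
  have hph' := (hph.congr_of_eventuallyEq (f₁ := fun y => (c - φ y) * ((1 / (c - φ 0)) *
      ((φ y - φ 0) * deriv y₁ y - deriv (deriv φ) y * ∫ s in (0:ℝ)..y, y₁ s)))
    (Filter.Eventually.of_forall fun y => by
      simp only [Pi.sub_apply, Pi.mul_apply]
      ring)).deriv
  have hLφ := Lop_deriv_eq_zero c ω A φ hφ hTW x
  have hLy' := hLy x
  have hW' := hW x
  rw [eq_div_iff (sub_pos.2 (hφc x)).ne'] at hW'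
  unfold Lop at hLφ hLy' ⊢
  simp only [hh]
  rw [hph']
  field_simp
  linear_combination (φ x - φ 0) * hLy' - (∫ s in (0:ℝ)..x, y₁ s) * hLφ + hW'
end

section
/- Let ω ≥ 0, c ∈ ℝ, and let φ : ℝ → ℝ be smooth, even, and 2π-periodic with φ(x) < c for all x. Let g : ℝ → ℝ be continuous and let χ, y₁ : ℝ → ℝ be twice continuously differentiable with χ even and 2π-periodic and y₁ even, satisfying (L y₁)(x) = 0 and (L χ)(x) = g(x) for all x ∈ ℝ. Then ∫₀^{2π} g(x) y₁(x) dx = (c - φ(0)) χ(0) y₁'(2π). -/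
/-!
The argument is Lagrange's identity. With `p = c - φ`, the function
`F = p y₁' χ - p χ' y₁` satisfies `F' = (L χ) y₁ - χ (L y₁) = g y₁`, because the zeroth-order terms
of `L` cancel; hence the integral is `F (2π) - F 0`. The derivative of an even function vanishes
at `0`, so `χ' 0 = y₁' 0 = 0`, and `χ' (2π) = 0` by periodicity. Only the term `p y₁' χ` at `2π`
survives.
-/

open Real

theorem deriv_zero_of_even {f : ℝ → ℝ} (hf : ∀ x, f (-x) = f x) : deriv f 0 = 0 := by
  have h := deriv_comp_neg f 0
  rw [funext hf, neg_zero] at h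
  linarith

theorem hasDerivAt_flux {c : ℝ} {φ f : ℝ → ℝ} (hφ : Differentiable ℝ φ) (hf : ContDiff ℝ 2 f)
    (x : ℝ) :
    HasDerivAt (fun y => (c - φ y) * deriv f y) (deriv (fun y => (c - φ y) * deriv f y) x) x := by
  have hf' : Differentiable ℝ (deriv f) := hf.differentiable_deriv_two
  exact DifferentiableAt.hasDerivAt (((differentiableAt_const c).sub (hφ x)).mul (hf' x))

/-- Lagrange-identity boundary computation: if `φ` is smooth, even,
`2π`-periodic with `φ < c`, `y₁` is an even `C²` solution of `L y₁ = 0`, and `χ` is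
an even, `2π`-periodic `C²` solution of `L χ = g`, then
`∫₀^{2π} g y₁ = (c - φ(0)) χ(0) y₁'(2π)`. -/
theorem integral_g_y1_eq_boundary_term (ω c : ℝ) (hω : 0 ≤ ω)
    (φ g χ y₁ : ℝ → ℝ)
    (hφ : ContDiff ℝ (⊤ : ℕ∞) φ) (hφe : ∀ x, φ (-x) = φ x) (hφp : ∀ x, φ (x + 2 * π) = φ x)
    (hφc : ∀ x, φ x < c)
    (hg : Continuous g) (hχ : ContDiff ℝ 2 χ) (hy : ContDiff ℝ 2 y₁)
    (hχe : ∀ x, χ (-x) = χ x) (hχp : ∀ x, χ (x + 2 * π) = χ x)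
    (hye : ∀ x, y₁ (-x) = y₁ x)
    (hLy : ∀ x : ℝ, Lop c ω φ y₁ x = 0) (hLχ : ∀ x : ℝ, Lop c ω φ χ x = g x) :
    (∫ x in (0:ℝ)..(2 * π), g x * y₁ x) = (c - φ 0) * χ 0 * deriv y₁ (2 * π) := by
  have hφd : Differentiable ℝ φ := hφ.differentiable (by simp)
  have hF : ∀ x, HasDerivAt
      (fun y => (c - φ y) * deriv y₁ y * χ y - (c - φ y) * deriv χ y * y₁ y) (g x * y₁ x) x := by
    intro x
    have hχ' := (hχ.differentiable (by simp) x).hasDerivAt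
    have hy' := (hy.differentiable (by simp) x).hasDerivAt
    refine (((hasDerivAt_flux (c := c) hφd hy x).mul hχ').sub
      ((hasDerivAt_flux (c := c) hφd hχ x).mul hy')).congr_deriv ?_
    have h1 := hLy x
    have h2 := hLχ x
    simp only [Lop] at h1 h2
    linear_combination y₁ x * h2 - χ x * h1
  have hint : IntervalIntegrable (fun x => g x * y₁ x) MeasureTheory.volume 0 (2 * π) :=
    (hg.mul hy.continuous).intervalIntegrable _ _
  rw [intervalIntegral.integral_eq_sub_of_hasDerivAt (fun x _ => hF x) hint]
  have hχ0 : deriv χ 0 = 0 := deriv_zero_of_even hχe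
  have hy0 : deriv y₁ 0 = 0 := deriv_zero_of_even hye
  have hχ2 : deriv χ (2 * π) = 0 := by
    have h := deriv_comp_add_const χ (2 * π) 0
    rw [funext hχp, zero_add] at h
    rw [← h, hχ0]
  have hφ2 : φ (2 * π) = φ 0 := by simpa using hφp 0
  have hχ3 : χ (2 * π) = χ 0 := by simpa using hχp 0
  simp only [hχ0, hy0, hχ2, hφ2, hχ3]
  ring
end

section
/- Let ω ≥ 0, c ∈ ℝ with 2c + ω ≠ 0, A ∈ ℝ, and let φ : ℝ → ℝ be twice continuously differentiable satisfying the traveling-wave equation with speed c and integration constant A. Let h : ℝ → ℝ be twice continuously differentiable with (L h)(x) = 1 for all x ∈ ℝ. Then the function χ(x) := -c/(2c + ω) + φ(x)/(2c + ω) + ((c(c - ω) + 2A)/(2c + ω)) h(x) satisfies (L χ)(x) = φ(x) for all x ∈ ℝ. -/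
/-!
By linearity, `(2c + ω) L χ = -c L 1 + L φ + (c(c - ω) + 2A) L h`. Here
`L 1 = c - ω - 3φ + φ''` and `L φ = -(c - φ)φ'' + (φ')² + (c - ω - 3φ + φ'')φ`; eliminating
`-2(c - φ)φ'' + (φ')² - 3φ²` by twice the traveling-wave equation gives
`-c L 1 + L φ = (2c + ω) φ - (c(c - ω) + 2A)`, and the constant is cancelled by `L h = 1`.
The `C²` hypotheses ensure that every derivative involved is a genuine one.
-/

open Real

/-- If `φ` solves the traveling-wave equation with speed `c` and
integration constant `A`, `2c + ω ≠ 0`, and `L h = 1`, then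
`χ = -c/(2c+ω) + φ/(2c+ω) + ((c(c-ω) + 2A)/(2c+ω)) h` satisfies `L χ = φ`. -/
theorem L_chi_eq_phi (ω c A : ℝ) (hω : 0 ≤ ω) (hcω : 2 * c + ω ≠ 0)
    (φ h : ℝ → ℝ) (hφ : ContDiff ℝ 2 φ)
    (hTW : ∀ x : ℝ,
      -(c - φ x) * deriv (deriv φ) x + (c - ω) * φ x
        - (3/2) * φ x ^ 2 + (1/2) * (deriv φ x) ^ 2 + A = 0)
    (hh : ContDiff ℝ 2 h) (hLh : ∀ x : ℝ, Lop c ω φ h x = 1) :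
    ∀ x : ℝ,
      Lop c ω φ (fun y =>
        -c / (2 * c + ω) + φ y / (2 * c + ω) + ((c * (c - ω) + 2 * A) / (2 * c + ω)) * h y) x
      = φ x := by
  intro x
  have e2 : (2 : WithTop ℕ∞) = 1 + 1 := by norm_num
  have dφ : Differentiable ℝ φ := hφ.differentiable (by norm_num)
  have dh : Differentiable ℝ h := hh.differentiable (by norm_num)
  have dφ' : Differentiable ℝ (deriv φ) := by
    rw [e2, contDiff_succ_iff_deriv] at hφ
    exact hφ.2.2.differentiable (by norm_num)
  have dh' : Differentiable ℝ (deriv h) := by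
    rw [e2, contDiff_succ_iff_deriv] at hh
    exact hh.2.2.differentiable (by norm_num)
  have dχ : deriv (fun y => -c / (2 * c + ω) + φ y / (2 * c + ω)
      + ((c * (c - ω) + 2 * A) / (2 * c + ω)) * h y)
      = fun y => deriv φ y / (2 * c + ω)
        + ((c * (c - ω) + 2 * A) / (2 * c + ω)) * deriv h y := by
    funext y
    exact ((((dφ y).hasDerivAt.div_const _).const_add _).add
      ((dh y).hasDerivAt.const_mul _)).deriv
  have Lh := hLh x
  have T := hTW x
  have dc : HasDerivAt (fun y => c - φ y) (-deriv φ x) x :=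
    (dφ x).hasDerivAt.const_sub c
  have d1 : deriv (fun y => (c - φ y) * deriv h y) x
      = -deriv φ x * deriv h x + (c - φ x) * deriv (deriv h) x :=
    (dc.mul (dh' x).hasDerivAt).deriv
  have d2 : deriv (fun y => (c - φ y) * (deriv φ y / (2 * c + ω)
        + ((c * (c - ω) + 2 * A) / (2 * c + ω)) * deriv h y)) x
      = -deriv φ x * (deriv φ x / (2 * c + ω)
        + ((c * (c - ω) + 2 * A) / (2 * c + ω)) * deriv h x)
        + (c - φ x) * (deriv (deriv φ) x / (2 * c + ω)
        + ((c * (c - ω) + 2 * A) / (2 * c + ω)) * deriv (deriv h) x) :=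
    (dc.mul (((dφ' x).hasDerivAt.div_const _).add ((dh' x).hasDerivAt.const_mul _))).deriv
  simp only [Lop] at Lh ⊢
  rw [d1] at Lh
  rw [dχ, d2]
  field_simp
  linear_combination 2 * T + (c * (c - ω) + 2 * A) * Lh
end

section
/- Let ω ≥ 0, c ∈ ℝ with 2c + ω ≠ 0, A ∈ ℝ, and let φ : ℝ → ℝ be twice continuously differentiable satisfying the traveling-wave equation with speed c and integration constant A. Let h : ℝ → ℝ be twice continuously differentiable with (L h)(x) = 1 for all x ∈ ℝ. Then the function Φ(x) := (c - ω)/(2c + ω) - 3φ(x)/(2c + ω) - (((c - ω)² + 6A)/(2c + ω)) h(x) satisfies (L Φ)(x) = -φ''(x) for all x ∈ ℝ. -/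
/-!
By linearity it suffices to know `L` on `1`, `φ` and `h`. Directly, `L 1 = c - ω - 3 φ + φ''`;
by hypothesis, `L h = 1`; and eliminating `(φ')²` from `L φ` by means of the traveling-wave
equation gives `L φ = c φ'' - (c - ω) φ - 2 A`. Hence `(2 c + ω) L Φ` equals
`(c - ω) L 1 - 3 L φ - ((c - ω)² + 6 A) = -(2 c + ω) φ''`.
-/

open Real

/-- If `φ` solves the traveling-wave equation with speed `c` and
integration constant `A`, `2c + ω ≠ 0`, and `L h = 1`, then
`Φ = (c-ω)/(2c+ω) - 3φ/(2c+ω) - (((c-ω)² + 6A)/(2c+ω)) h` satisfies `L Φ = -φ''`. -/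
theorem L_Phi_eq_neg_phi'' (ω c A : ℝ) (hω : 0 ≤ ω) (hcω : 2 * c + ω ≠ 0)
    (φ h : ℝ → ℝ) (hφ : ContDiff ℝ 2 φ)
    (hTW : ∀ x : ℝ,
      -(c - φ x) * deriv (deriv φ) x + (c - ω) * φ x
        - (3/2) * φ x ^ 2 + (1/2) * (deriv φ x) ^ 2 + A = 0)
    (hh : ContDiff ℝ 2 h) (hLh : ∀ x : ℝ, Lop c ω φ h x = 1) :
    ∀ x : ℝ,
      Lop c ω φ (fun y =>
        (c - ω) / (2 * c + ω) - 3 * φ y / (2 * c + ω)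
          - (((c - ω) ^ 2 + 6 * A) / (2 * c + ω)) * h y) x
      = -deriv (deriv φ) x := by
  intro x
  have dφ : Differentiable ℝ φ := hφ.differentiable (by norm_num)
  have dh : Differentiable ℝ h := hh.differentiable (by norm_num)
  have dφ' : HasDerivAt (deriv φ) (deriv (deriv φ) x) x :=
    (((contDiff_succ_iff_deriv (n := 1)).1 hφ).2.2.differentiable (by norm_num) x).hasDerivAt
  have dh' : HasDerivAt (deriv h) (deriv (deriv h) x) x :=
    (((contDiff_succ_iff_deriv (n := 1)).1 hh).2.2.differentiable (by norm_num) x).hasDerivAt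
  have hcφ : HasDerivAt (fun y => c - φ y) (-deriv φ x) x :=
    (dφ x).hasDerivAt.const_sub c
  have hΦ' : deriv (fun y => (c - ω) / (2 * c + ω) - 3 * φ y / (2 * c + ω)
        - (((c - ω) ^ 2 + 6 * A) / (2 * c + ω)) * h y)
      = fun y => -(3 * deriv φ y / (2 * c + ω))
        - (((c - ω) ^ 2 + 6 * A) / (2 * c + ω)) * deriv h y := by
    funext y
    exact (((((dφ y).hasDerivAt.const_mul 3).div_const (2 * c + ω)).const_sub _).sub
      ((dh y).hasDerivAt.const_mul _)).deriv
  have hΦ'' := (hcφ.fun_mul ((((dφ'.const_mul 3).div_const (2 * c + ω)).fun_neg).fun_sub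
    (dh'.const_mul (((c - ω) ^ 2 + 6 * A) / (2 * c + ω))))).deriv
  have hL := hLh x
  have hT := hTW x
  simp only [Lop] at hL ⊢
  rw [(hcφ.fun_mul dh').deriv] at hL
  rw [hΦ', hΦ'']
  field_simp
  -- The multiple `-6` of the wave equation removes the `(φ')²` term coming from `-3 L φ`.
  linear_combination (-((c - ω) ^ 2 + 6 * A)) * hL - 6 * hT
end

section
/- Let c, ω ∈ ℝ, A, A' ∈ ℝ, and let φ : ℝ → ℝ be twice continuously differentiable satisfying the traveling-wave equation with speed c and integration constant A. Let ψ : ℝ → ℝ be twice continuously differentiable with (L ψ)(x) = φ''(x) - φ(x) - A' for all x ∈ ℝ. Then the function x ↦ ω + 2φ(x) - (ω + 2c) ψ(x) satisfies L(ω + 2φ - (ω + 2c)ψ)(x) = ω(c - ω) + (ω + 2c) A' - 4A for all x ∈ ℝ. -/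
/-!
`L` is linear on `C²` functions, so only `L 1`, `L φ` and `L ψ` are needed. Plainly
`L 1 = c - ω - 3φ + φ''`, and subtracting twice the traveling-wave equation from the expansion of `L φ`
gives `L φ = c φ'' - (c - ω) φ - 2A`. In `ω L 1 + 2 L φ - (ω + 2c)(φ'' - φ - A')` all multiples of
`φ''` and of `φ` cancel, leaving the constant.
-/

open Real

/-- The divergence-form operator expanded by the product rule. -/
theorem Lop_eq_expanded (c ω : ℝ) {φ f : ℝ → ℝ} {x : ℝ} (hφ : DifferentiableAt ℝ φ x)
    (hf : DifferentiableAt ℝ (deriv f) x) :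
    Lop c ω φ f x = -((c - φ x) * deriv (deriv f) x) + deriv φ x * deriv f x
      + (c - ω - 3 * φ x + deriv (deriv φ) x) * f x := by
  have h := ((hφ.hasDerivAt.const_sub c).mul hf.hasDerivAt).deriv
  have h' : deriv (fun y => (c - φ y) * deriv f y) x
      = -deriv φ x * deriv f x + (c - φ x) * deriv (deriv f) x := h
  rw [Lop, h']
  ring

/-- If `φ` is a `C²` solution of the traveling-wave equation with
speed `c` and integration constant `A`, and `ψ` is `C²` with
`L ψ = φ'' - φ - A'`, then `L(ω + 2φ - (ω + 2c)ψ) = ω(c - ω) + (ω + 2c)A' - 4A`. -/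
theorem L_combination_eq_dc (c ω A A' : ℝ) (φ ψ : ℝ → ℝ)
    (hφ : ContDiff ℝ 2 φ)
    (hTW : ∀ x : ℝ,
      -(c - φ x) * deriv (deriv φ) x + (c - ω) * φ x
        - (3/2) * φ x ^ 2 + (1/2) * (deriv φ x) ^ 2 + A = 0)
    (hψ : ContDiff ℝ 2 ψ)
    (hLψ : ∀ x : ℝ, Lop c ω φ ψ x = deriv (deriv φ) x - φ x - A') :
    ∀ x : ℝ,
      Lop c ω φ (fun y => ω + 2 * φ y - (ω + 2 * c) * ψ y) x
        = ω * (c - ω) + (ω + 2 * c) * A' - 4 * A := by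
  intro x
  have hφ1 : Differentiable ℝ φ := hφ.differentiable (by norm_num)
  have hψ1 : Differentiable ℝ ψ := hψ.differentiable (by norm_num)
  have hφ2 : Differentiable ℝ (deriv φ) := hφ.differentiable_deriv_two
  have hψ2 : Differentiable ℝ (deriv ψ) := hψ.differentiable_deriv_two
  have hd1 : deriv (fun y => ω + 2 * φ y - (ω + 2 * c) * ψ y)
      = fun y => 2 * deriv φ y - (ω + 2 * c) * deriv ψ y := by
    funext y
    exact ((((hφ1 y).hasDerivAt.const_mul 2).const_add ω).sub
      ((hψ1 y).hasDerivAt.const_mul (ω + 2 * c))).deriv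
  have hd2 : HasDerivAt (fun y => 2 * deriv φ y - (ω + 2 * c) * deriv ψ y)
      (2 * deriv (deriv φ) x - (ω + 2 * c) * deriv (deriv ψ) x) x :=
    ((hφ2 x).hasDerivAt.const_mul 2).sub ((hψ2 x).hasDerivAt.const_mul (ω + 2 * c))
  have hL := hLψ x
  rw [Lop_eq_expanded c ω (hφ1 x) (hψ2 x)] at hL
  rw [Lop_eq_expanded c ω (hφ1 x) (hd1 ▸ hd2.differentiableAt), hd1, hd2.deriv]
  linear_combination 4 * hTW x - (ω + 2 * c) * hL
end

section
/- Let ω ≥ 0, c ∈ ℝ, A' ∈ ℝ, and let φ : ℝ → ℝ be three times continuously differentiable and 2π-periodic with φ(x) < c for all x. Let ψ, h : ℝ → ℝ be twice continuously differentiable and 2π-periodic with ∫₀^{2π} ψ(x) dx = 0, satisfying (L ψ)(x) = φ''(x) - φ(x) - A' and (L h)(x) = 1 for all x ∈ ℝ. Set g := -ψ - A' h (so that (L g)(x) = φ(x) - φ''(x)). Then: (i) ∫₀^{2π} g dx = -A' ∫₀^{2π} h dx; (ii) ∫₀^{2π} g(x)(φ(x) - φ''(x)) dx = -∫₀^{2π}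 (ψ(x) φ(x) + ψ'(x) φ'(x)) dx + A'² ∫₀^{2π} h dx; and consequently (iii) (∫₀^{2π} g(φ - φ'') dx)(∫₀^{2π} h dx) - (∫₀^{2π} g dx)² = -(∫₀^{2π} (ψ φ + ψ' φ') dx)(∫₀^{2π} h dx). -/
/-!
The operator `L` is symmetric on `2π`-periodic functions: `f₁ L f₂ - f₂ L f₁` is the derivative of
the periodic function `(c - φ) (f₁' f₂ - f₂' f₁)`, so its integral over a period vanishes
(`integral_mul_Lop_comm`). Applied to `ψ` and `h` this gives
`∫ h (φ'' - φ - A') = ∫ h L ψ = ∫ ψ L h = ∫ ψ = 0`, that is, `∫ h (φ - φ'') = -A' ∫ h`.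
Integration by parts gives `∫ ψ (φ - φ'') = ∫ (ψ φ + ψ' φ')` (`integral_mul_sub_deriv2`).
Expanding `g = -ψ - A' h` by linearity yields (i) and (ii), and (iii) is algebra.
-/

open Real

theorem periodic_deriv {f : ℝ → ℝ} {T : ℝ} (hf : ∀ x, f (x + T) = f x) (x : ℝ) :
    deriv f (x + T) = deriv f x := by
  rw [← deriv_comp_add_const, funext hf]

/-- Only the endpoint values `F 0` and `F (2π)` enter, so periodicity is needed only there. -/
theorem integral_deriv_eq_zero {F F' : ℝ → ℝ} (hF : ∀ x, HasDerivAt F (F' x) x)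
    (hc : Continuous F') (hp : F (0 + 2 * π) = F 0) :
    (∫ x in (0:ℝ)..(2 * π), F' x) = 0 := by
  rw [intervalIntegral.integral_eq_sub_of_hasDerivAt (fun x _ => hF x)
    (hc.intervalIntegrable _ _)]
  rw [zero_add] at hp
  rw [hp, sub_self]

theorem integral_mul_sub_deriv2 {φ ψ : ℝ → ℝ} (hφ : ContDiff ℝ 2 φ)
    (hφp : ∀ x, φ (x + 2 * π) = φ x) (hψ : ContDiff ℝ 2 ψ) (hψp : ∀ x, ψ (x + 2 * π) = ψ x) :
    (∫ x in (0:ℝ)..(2 * π), ψ x * (φ x - deriv (deriv φ) x))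
      = ∫ x in (0:ℝ)..(2 * π), (ψ x * φ x + deriv ψ x * deriv φ x) := by
  have hφ1 : ContDiff ℝ 1 (deriv φ) := hφ.deriv'
  have hψ1 : ContDiff ℝ 1 (deriv ψ) := hψ.deriv'
  have hφ2 : Continuous (deriv (deriv φ)) := hφ1.continuous_deriv le_rfl
  have cφ := hφ.continuous
  have cφ1 := hφ1.continuous
  have cψ := hψ.continuous
  have cψ1 := hψ1.continuous
  have key : (∫ x in (0:ℝ)..(2 * π), (deriv ψ x * deriv φ x + ψ x * deriv (deriv φ) x)) = 0 := by
    refine integral_deriv_eq_zero (F := fun x => ψ x * deriv φ x) (fun x => ?_) (by fun_prop) ?_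
    · exact ((hψ.differentiable (by norm_num)) x).hasDerivAt.mul
        ((hφ1.differentiable (by norm_num)) x).hasDerivAt
    · simp only [hψp, periodic_deriv hφp]
  rw [← sub_eq_zero, ← intervalIntegral.integral_sub
    (Continuous.intervalIntegrable (by fun_prop) _ _)
    (Continuous.intervalIntegrable (by fun_prop) _ _), ← neg_eq_zero,
    ← intervalIntegral.integral_neg, ← key]
  congr 1
  ext x
  ring

theorem integral_mul_Lop_comm {c ω : ℝ} {φ f₁ f₂ : ℝ → ℝ} (hφ : ContDiff ℝ 2 φ)
    (hφp : ∀ x, φ (x + 2 * π) = φ x)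
    (h₁ : ContDiff ℝ 2 f₁) (h₁p : ∀ x, f₁ (x + 2 * π) = f₁ x)
    (h₂ : ContDiff ℝ 2 f₂) (h₂p : ∀ x, f₂ (x + 2 * π) = f₂ x) :
    (∫ x in (0:ℝ)..(2 * π), (f₁ x * Lop c ω φ f₂ x - f₂ x * Lop c ω φ f₁ x)) = 0 := by
  have hφ1 : ContDiff ℝ 1 φ := hφ.of_le (by norm_num)
  have hd : ∀ f : ℝ → ℝ, ContDiff ℝ 2 f → ContDiff ℝ 1 (fun y => (c - φ y) * deriv f y) :=
    fun f hf => (contDiff_const.sub hφ1).mul hf.deriv'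
  have cφ2 : Continuous (deriv (deriv φ)) :=
    (show ContDiff ℝ 1 (deriv φ) from hφ.deriv').continuous_deriv le_rfl
  have cL : ∀ f : ℝ → ℝ, ContDiff ℝ 2 f → Continuous (Lop c ω φ f) := by
    intro f hf
    have := (hd f hf).continuous_deriv le_rfl
    have cf := hf.continuous
    have cφ := hφ.continuous
    unfold Lop
    fun_prop
  have c₁ := h₁.continuous
  have c₂ := h₂.continuous
  have cL₁ := cL f₁ h₁
  have cL₂ := cL f₂ h₂
  refine integral_deriv_eq_zero
    (F := fun x => (c - φ x) * deriv f₁ x * f₂ x - (c - φ x) * deriv f₂ x * f₁ x)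
    (fun x => ?_) (by fun_prop) ?_
  · have e₁ := (((hd f₁ h₁).differentiable (by norm_num)) x).hasDerivAt
    have e₂ := (((hd f₂ h₂).differentiable (by norm_num)) x).hasDerivAt
    have d₁ := ((h₁.differentiable (by norm_num)) x).hasDerivAt
    have d₂ := ((h₂.differentiable (by norm_num)) x).hasDerivAt
    refine ((e₁.mul d₂).sub (e₂.mul d₁)).congr_deriv ?_
    simp only [Lop]
    ring
  · simp only [hφp, h₁p, h₂p, periodic_deriv h₁p, periodic_deriv h₂p]

/-- Identities for `g = -ψ - A' h` (so that `L g = φ - φ''`), where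
`L ψ = φ'' - φ - A'`, `L h = 1`, `ψ, h` are `2π`-periodic and `∫₀^{2π} ψ = 0`:
(i) `∫ g = -A' ∫ h`;
(ii) `∫ g (φ - φ'') = -∫ (ψ φ + ψ' φ') + A'² ∫ h`;
(iii) `(∫ g (φ - φ''))(∫ h) - (∫ g)² = -(∫ (ψ φ + ψ' φ'))(∫ h)`. -/
theorem det_A0_identities (ω c A' : ℝ) (hω : 0 ≤ ω)
    (φ ψ h : ℝ → ℝ)
    (hφ : ContDiff ℝ 3 φ) (hφp : ∀ x, φ (x + 2 * π) = φ x) (hφc : ∀ x, φ x < c)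
    (hψ : ContDiff ℝ 2 ψ) (hψp : ∀ x, ψ (x + 2 * π) = ψ x)
    (hh : ContDiff ℝ 2 h) (hhp : ∀ x, h (x + 2 * π) = h x)
    (hψm : (∫ x in (0:ℝ)..(2 * π), ψ x) = 0)
    (hLψ : ∀ x : ℝ, Lop c ω φ ψ x = deriv (deriv φ) x - φ x - A')
    (hLh : ∀ x : ℝ, Lop c ω φ h x = 1) :
    (∫ x in (0:ℝ)..(2 * π), (-ψ x - A' * h x))
        = -A' * (∫ x in (0:ℝ)..(2 * π), h x) ∧
    (∫ x in (0:ℝ)..(2 * π), (-ψ x - A' * h x) * (φ x - deriv (deriv φ) x))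
        = -(∫ x in (0:ℝ)..(2 * π), (ψ x * φ x + deriv ψ x * deriv φ x))
          + A' ^ 2 * (∫ x in (0:ℝ)..(2 * π), h x) ∧
    (∫ x in (0:ℝ)..(2 * π), (-ψ x - A' * h x) * (φ x - deriv (deriv φ) x))
          * (∫ x in (0:ℝ)..(2 * π), h x)
        - (∫ x in (0:ℝ)..(2 * π), (-ψ x - A' * h x)) ^ 2
      = -(∫ x in (0:ℝ)..(2 * π), (ψ x * φ x + deriv ψ x * deriv φ x))
          * (∫ x in (0:ℝ)..(2 * π), h x) := by
  have hφ2 : ContDiff ℝ 2 φ := hφ.of_le (by norm_num)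
  have cφ := hφ.continuous
  have cψ := hψ.continuous
  have ch := hh.continuous
  have cφ2 : Continuous (deriv (deriv φ)) :=
    (show ContDiff ℝ 1 (deriv φ) from hφ2.deriv').continuous_deriv le_rfl
  have i1 : (∫ x in (0:ℝ)..(2 * π), (-ψ x - A' * h x))
      = -A' * (∫ x in (0:ℝ)..(2 * π), h x) := by
    rw [intervalIntegral.integral_sub (Continuous.intervalIntegrable (by fun_prop) _ _)
      (Continuous.intervalIntegrable (by fun_prop) _ _), intervalIntegral.integral_neg, hψm,
      intervalIntegral.integral_const_mul]
    ring
  have hhF : (∫ x in (0:ℝ)..(2 * π), h x * (φ x - deriv (deriv φ) x))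
      = -A' * (∫ x in (0:ℝ)..(2 * π), h x) := by
    have key := integral_mul_Lop_comm (c := c) (ω := ω) hφ2 hφp hψ hψp hh hhp
    simp only [hLψ, hLh] at key
    have e : ∀ x, ψ x * 1 - h x * (deriv (deriv φ) x - φ x - A')
        = ψ x + (h x * (φ x - deriv (deriv φ) x) + A' * h x) := fun x => by ring
    simp only [e] at key
    rw [intervalIntegral.integral_add (Continuous.intervalIntegrable (by fun_prop) _ _)
      (Continuous.intervalIntegrable (by fun_prop) _ _),
      intervalIntegral.integral_add (Continuous.intervalIntegrable (by fun_prop) _ _)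
      (Continuous.intervalIntegrable (by fun_prop) _ _), hψm,
      intervalIntegral.integral_const_mul] at key
    linarith
  have i2 : (∫ x in (0:ℝ)..(2 * π), (-ψ x - A' * h x) * (φ x - deriv (deriv φ) x))
      = -(∫ x in (0:ℝ)..(2 * π), (ψ x * φ x + deriv ψ x * deriv φ x))
        + A' ^ 2 * (∫ x in (0:ℝ)..(2 * π), h x) := by
    have e : ∀ x, (-ψ x - A' * h x) * (φ x - deriv (deriv φ) x)
        = -(ψ x * (φ x - deriv (deriv φ) x)) - A' * (h x * (φ x - deriv (deriv φ) x)) :=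
      fun x => by ring
    simp only [e]
    rw [intervalIntegral.integral_sub (Continuous.intervalIntegrable (by fun_prop) _ _)
      (Continuous.intervalIntegrable (by fun_prop) _ _), intervalIntegral.integral_neg,
      intervalIntegral.integral_const_mul, hhF, integral_mul_sub_deriv2 hφ2 hφp hψ hψp]
    ring
  refine ⟨i1, i2, ?_⟩
  rw [i1, i2]
  ring
end
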